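/- arXiv:1906.03009 — 11 statements merged into one kernel-verified Lean document; each statement's English description precedes it below -/
import Mathlib

section
/- Let H and L be real Hilbert spaces, j : H → L a bounded linear map, L_σ a closed subspace of L with orthogonal projection P : L → L, and V⁰ a closed subspace of H with j(V⁰) ⊆ L_σ. Assume the Poincaré–Friedrichs inequality ‖j w‖_L ≤ C_PF·‖w‖_H for all w ∈ V⁰, with C_PF > 0. Let ν > 0, f ∈ L, and let v ∈ V⁰ satisfy ν·⟨v, w⟩_H = ⟨f, j w⟩_L for all w ∈ V⁰. Then ‖v‖_H ≤ (C_PF/ν)·‖P f‖_L. -/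
/-!
Energy estimate: testing the weak equation with `v` itself gives `ν‖v‖² = ⟪f, j v⟫`. Because
`j v ∈ Lσ` and `f - P f ⊥ Lσ`, the right-hand side equals `⟪P f, j v⟫`, which Cauchy–Schwarz and
Poincaré–Friedrichs bound by `C_PF ‖P f‖ ‖v‖`; it remains to divide by `ν‖v‖` when `v ≠ 0`.
-/

open RealInnerProductSpace

/-- Abstract form of Lemma 3.5 (continuous stability estimate): the norm of the Stokes
velocity is bounded by the norm of the Helmholtz–Hodge projector of the data only,
`‖v‖_H ≤ (C_PF/ν)‖P f‖_L`, where `P` is the orthogonal projection onto `Lσ` and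
`C_PF` is the Poincaré–Friedrichs constant. -/
theorem continuous_stability_estimate
    {H L : Type*}
    [NormedAddCommGroup H] [InnerProductSpace ℝ H] [CompleteSpace H]
    [NormedAddCommGroup L] [InnerProductSpace ℝ L] [CompleteSpace L]
    (j : H →L[ℝ] L)
    (Lσ : Submodule ℝ L) (hLσclosed : IsClosed (Lσ : Set L))
    -- `P` is the orthogonal projection of `L` onto `Lσ`
    (P : L → L) (hPmem : ∀ x, P x ∈ Lσ) (hPorth : ∀ x, x - P x ∈ Lσᗮ)
    (V0 : Submodule ℝ H) (hV0closed : IsClosed (V0 : Set H))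
    (hjV0 : ∀ w ∈ V0, j w ∈ Lσ)
    (C_PF : ℝ) (hC_PF : 0 < C_PF)
    (hPF : ∀ w ∈ V0, ‖j w‖ ≤ C_PF * ‖w‖)
    (ν : ℝ) (hν : 0 < ν) (f : L)
    (v : H) (hv : v ∈ V0)
    (hweak : ∀ w ∈ V0, ν * ⟪v, w⟫ = ⟪f, j w⟫) :
    ‖v‖ ≤ (C_PF / ν) * ‖P f‖ := by
  have horth : ⟪f - P f, j v⟫ = 0 :=
    Submodule.inner_left_of_mem_orthogonal (hjV0 v hv) (hPorth f)
  rw [inner_sub_left, sub_eq_zero] at horth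
  have henergy : ν * ‖v‖ * ‖v‖ ≤ C_PF * ‖P f‖ * ‖v‖ := by
    calc ν * ‖v‖ * ‖v‖ = ν * ⟪v, v⟫ := by rw [real_inner_self_eq_norm_mul_norm, mul_assoc]
      _ = ⟪P f, j v⟫ := by rw [hweak v hv, horth]
      _ ≤ ‖P f‖ * ‖j v‖ := real_inner_le_norm _ _
      _ ≤ ‖P f‖ * (C_PF * ‖v‖) := by gcongr; exact hPF v hv
      _ = C_PF * ‖P f‖ * ‖v‖ := by ring
  rcases (norm_nonneg v).eq_or_lt with h0 | hpos
  · rw [← h0]; positivity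
  · rw [div_mul_eq_mul_div, le_div_iff₀ hν, mul_comm]
    exact le_of_mul_le_mul_right henergy hpos
end

section
/- Let H and L be real Hilbert spaces, j : H → L a bounded linear map, L_σ a closed subspace of L with orthogonal projection P : L → L. Let V_h⁰ be a closed subspace of H, and let I_h : V_h⁰ → L be a linear map with I_h(V_h⁰) ⊆ L_σ and ‖j w − I_h w‖_L ≤ ε₁·‖w‖_H for all w ∈ V_h⁰, where ε₁ ≥ 0. Assume ‖j w‖_L ≤ C_PF·‖w‖_H for all w ∈ V_h⁰, with C_PF > 0. Let ν > 0, f ∈ L, and let v_h ∈ V_h⁰ satisfy ν·⟨v_h, w⟩_H = ⟨f, I_h w⟩_L for all w ∈ V_h⁰. Then ‖v_h‖_H ≤ (C_PF + ε₁)·ν⁻¹·‖P f‖_L. -/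
/-!
Energy argument: testing the discrete problem with `vh` itself gives `ν ‖vh‖² = ⟪f, Ih vh⟫`.
Since `Ih vh` lies in `Lσ` and `f - P f` is orthogonal to `Lσ`, the load `f` may be replaced by
`P f`. Cauchy-Schwarz together with `‖Ih vh‖ ≤ ‖j vh‖ + ‖j vh - Ih vh‖ ≤ (C_PF + ε₁) ‖vh‖`
bounds the right-hand side, and dividing by `ν ‖vh‖` (when `vh ≠ 0`) yields the estimate.
-/

open RealInnerProductSpace

/-- Abstract form of the first part of Lemma 4.4 (discrete stability estimate for the
pressure-robust modified method): `‖v_h‖_H ≤ (C_PF + ε₁)ν⁻¹‖P f‖_L`, where `I_h` is the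
reconstruction operator mapping the discretely divergence-free subspace `Vh0` into the
divergence-free fields `Lσ`, with `‖j w − I_h w‖ ≤ ε₁‖w‖` on `Vh0`. -/
theorem discrete_stability_estimate_pressure_robust
    {H L : Type*}
    [NormedAddCommGroup H] [InnerProductSpace ℝ H] [CompleteSpace H]
    [NormedAddCommGroup L] [InnerProductSpace ℝ L] [CompleteSpace L]
    (j : H →L[ℝ] L)
    (Lσ : Submodule ℝ L) (hLσclosed : IsClosed (Lσ : Set L))
    -- `P` is the orthogonal projection of `L` onto `Lσ`
    (P : L → L) (hPmem : ∀ x, P x ∈ Lσ) (hPorth : ∀ x, x - P x ∈ Lσᗮ)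
    (Vh0 : Submodule ℝ H) (hVh0closed : IsClosed (Vh0 : Set H))
    (Ih : Vh0 →ₗ[ℝ] L) (hIhLσ : ∀ w : Vh0, Ih w ∈ Lσ)
    (ε₁ : ℝ) (hε₁ : 0 ≤ ε₁)
    (hIh : ∀ w : Vh0, ‖j (w : H) - Ih w‖ ≤ ε₁ * ‖(w : H)‖)
    (C_PF : ℝ) (hC_PF : 0 < C_PF)
    (hPF : ∀ w ∈ Vh0, ‖j w‖ ≤ C_PF * ‖w‖)
    (ν : ℝ) (hν : 0 < ν) (f : L)
    (vh : H) (hvh : vh ∈ Vh0)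
    (hweak : ∀ w : Vh0, ν * ⟪vh, (w : H)⟫ = ⟪f, Ih w⟫) :
    ‖vh‖ ≤ (C_PF + ε₁) * ν⁻¹ * ‖P f‖ := by
  set w : Vh0 := ⟨vh, hvh⟩
  have hIw : ‖Ih w‖ ≤ (C_PF + ε₁) * ‖vh‖ := by
    have h1 : ‖Ih w‖ ≤ ‖j vh‖ + ‖j vh - Ih w‖ := norm_le_norm_add_norm_sub _ _
    have h2 : ‖j vh - Ih w‖ ≤ ε₁ * ‖vh‖ := hIh w
    linarith [hPF vh hvh]
  -- The gradient part `f - P f` is not seen by the divergence-free field `Ih w`.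
  have hPf : ⟪f, Ih w⟫ = ⟪P f, Ih w⟫ := by
    have h := Submodule.inner_left_of_mem_orthogonal (hIhLσ w) (hPorth f)
    rw [inner_sub_left] at h
    linarith
  have henergy : ν * ‖vh‖ ^ 2 ≤ ‖P f‖ * ((C_PF + ε₁) * ‖vh‖) :=
    calc ν * ‖vh‖ ^ 2 = ⟪P f, Ih w⟫ := by
          rw [← hPf, ← hweak w, ← real_inner_self_eq_norm_sq]
      _ ≤ ‖P f‖ * ‖Ih w‖ := real_inner_le_norm _ _
      _ ≤ ‖P f‖ * ((C_PF + ε₁) * ‖vh‖) := by gcongr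
  rcases (norm_nonneg vh).eq_or_lt with h0 | hpos
  · rw [← h0]
    positivity
  · have hdiv : ν * ‖vh‖ ≤ (C_PF + ε₁) * ‖P f‖ :=
      le_of_mul_le_mul_right (by linarith) hpos
    calc ‖vh‖ = ν⁻¹ * (ν * ‖vh‖) := by field_simp
      _ ≤ ν⁻¹ * ((C_PF + ε₁) * ‖P f‖) := by gcongr
      _ = (C_PF + ε₁) * ν⁻¹ * ‖P f‖ := by ring
end

section
/- Let H, L, Q be real Hilbert spaces, j : H → L a bounded linear map, L_σ a closed subspace of L with orthogonal projection P : L → L, and D : H → Q a bounded linear map with ‖D w‖_Q ≤ ‖w‖_H for all w ∈ H. Let Q_h be a closed subspace of Q with orthogonal projection π_h : Q → Q, and let V_h⁰ be a closed subspace of H such that π_h(D w) = 0 for all w ∈ V_h⁰. Assume ‖j w‖_L ≤ C_PF·‖w‖_H for all w ∈ V_h⁰, with C_PF > 0. Let ν > 0 and f ∈ L, and suppose there is α ∈ Q with ⟨f − P f, j w⟩_L = −⟨α, D w⟩_Q for all w ∈ H. If v_h ∈ V_h⁰ satisfies ν·⟨v_h, w⟩_H = ⟨f, j w⟩_L for all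 w ∈ V_h⁰, then ‖v_h‖_H ≤ C_PF·ν⁻¹·‖P f‖_L + ν⁻¹·‖α − π_h α‖_Q. -/
/-!
Testing the discrete equation with `w = vh` gives
`ν ‖vh‖² = ⟪P f, j vh⟫ + ⟪f - P f, j vh⟫ = ⟪P f, j vh⟫ - ⟪α, D vh⟫`. Since `πh (D vh) = 0`, the
vector `D vh` is orthogonal to `Qh`, so `α` may be replaced by `α - πh α`. Cauchy–Schwarz, the
Poincaré–Friedrichs bound and `‖D vh‖ ≤ ‖vh‖` bound the right-hand side by
`(C_PF ‖P f‖ + ‖α - πh α‖) ‖vh‖`; dividing by `ν ‖vh‖` gives the estimate.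
-/

open RealInnerProductSpace

/-- Abstract form of the second part of Lemma 4.4 (discrete stability estimate for classical,
non-pressure-robust mixed methods): `‖v_h‖ ≤ C_PF ν⁻¹‖P f‖ + ν⁻¹‖α − π_h α‖`, where `α`
abstracts the gradient part of the Helmholtz–Hodge decomposition of `f` via
`⟨f − P f, j w⟩ = −⟨α, D w⟩` and `π_h` is the orthogonal projection onto the discrete
pressure space `Qh`. -/
theorem discrete_stability_estimate_classical
    {H L Q : Type*}
    [NormedAddCommGroup H] [InnerProductSpace ℝ H] [CompleteSpace H]
    [NormedAddCommGroup L] [InnerProductSpace ℝ L] [CompleteSpace L]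
    [NormedAddCommGroup Q] [InnerProductSpace ℝ Q] [CompleteSpace Q]
    (j : H →L[ℝ] L)
    (Lσ : Submodule ℝ L) (hLσclosed : IsClosed (Lσ : Set L))
    -- `P` is the orthogonal projection of `L` onto `Lσ`
    (P : L → L) (hPmem : ∀ x, P x ∈ Lσ) (hPorth : ∀ x, x - P x ∈ Lσᗮ)
    (D : H →L[ℝ] Q) (hD : ∀ w : H, ‖D w‖ ≤ ‖w‖)
    (Qh : Submodule ℝ Q) (hQhclosed : IsClosed (Qh : Set Q))
    -- `πh` is the orthogonal projection of `Q` onto `Qh`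
    (πh : Q → Q) (hπmem : ∀ q, πh q ∈ Qh) (hπorth : ∀ q, q - πh q ∈ Qhᗮ)
    (Vh0 : Submodule ℝ H) (hVh0closed : IsClosed (Vh0 : Set H))
    (hdiscdivfree : ∀ w ∈ Vh0, πh (D w) = 0)
    (C_PF : ℝ) (hC_PF : 0 < C_PF)
    (hPF : ∀ w ∈ Vh0, ‖j w‖ ≤ C_PF * ‖w‖)
    (ν : ℝ) (hν : 0 < ν) (f : L)
    (α : Q) (hα : ∀ w : H, ⟪f - P f, j w⟫ = -⟪α, D w⟫)
    (vh : H) (hvh : vh ∈ Vh0)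
    (hweak : ∀ w ∈ Vh0, ν * ⟪vh, w⟫ = ⟪f, j w⟫) :
    ‖vh‖ ≤ C_PF * ν⁻¹ * ‖P f‖ + ν⁻¹ * ‖α - πh α‖ := by
  -- `D vh` is orthogonal to `Qh`, so `πh α` may be subtracted from `α` for free.
  have hDorth : D vh ∈ Qhᗮ := by
    simpa [hdiscdivfree vh hvh] using hπorth (D vh)
  have hπα : ⟪πh α, D vh⟫ = 0 := Submodule.inner_right_of_mem_orthogonal (hπmem α) hDorth
  have henergy : ν * (‖vh‖ * ‖vh‖) = ⟪P f, j vh⟫ - ⟪α - πh α, D vh⟫ := by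
    have h1 := hweak vh hvh
    have h2 := hα vh
    rw [real_inner_self_eq_norm_mul_norm] at h1
    rw [inner_sub_left] at h2 ⊢
    linarith
  have hP : ⟪P f, j vh⟫ ≤ ‖P f‖ * (C_PF * ‖vh‖) :=
    (real_inner_le_norm _ _).trans (by gcongr; exact hPF vh hvh)
  have hQ : -⟪α - πh α, D vh⟫ ≤ ‖α - πh α‖ * ‖vh‖ :=
    (neg_le_abs _).trans ((abs_real_inner_le_norm _ _).trans (by gcongr; exact hD vh))
  have hbound : ν * ‖vh‖ ≤ C_PF * ‖P f‖ + ‖α - πh α‖ := by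
    rcases (norm_nonneg vh).eq_or_lt with h0 | hpos
    · rw [← h0, mul_zero]
      positivity
    · refine le_of_mul_le_mul_right ?_ hpos
      linarith
  calc ‖vh‖ = ν⁻¹ * (ν * ‖vh‖) := by field_simp
    _ ≤ ν⁻¹ * (C_PF * ‖P f‖ + ‖α - πh α‖) := by gcongr
    _ = C_PF * ν⁻¹ * ‖P f‖ + ν⁻¹ * ‖α - πh α‖ := by ring
end

section
/- Let H, L, Q be real Hilbert spaces, j : H → L a bounded linear map, and D : H → Q a bounded linear map. Let V⁰ be a closed subspace of H with V⁰ ⊆ ker D, and let S : H → H be the orthogonal projection onto V⁰. Let Q_h be a closed subspace of Q with orthogonal projection π_h : Q → Q, and let V_h⁰ be a closed subspace of H such that π_h(D w) = 0 for all w ∈ V_h⁰. Assume there is δ ≥ 0 such that for every z ∈ L there exist ψ ∈ V⁰ and r ∈ Q satisfying ⟨ψ, y⟩_H − ⟨r, D y⟩_Q = ⟨z, j y⟩_L for all y ∈ H, and ‖r − π_h r‖_Q ≤ δ·‖z‖_L. Then for every w ∈ V_h⁰ it holds ‖j w − j(S w)‖_L ≤ δ·‖D w‖_Q. -/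
/-!
Duality argument: solve the dual problem with datum `z = j (w - S w)` and test it with
`y = w - S w`. The term `⟪ψ, y⟫` vanishes because `y ⊥ V0`, and `D y = D w` because `S w ∈ ker D`.
Since `πh (D w) = 0`, the vector `D w` is orthogonal to `Qh`, so
`‖z‖² = -⟪r, D w⟫ = -⟪r - πh r, D w⟫ ≤ δ ‖z‖ ‖D w‖`, and one factor `‖z‖` cancels.
-/

open RealInnerProductSpace

/-- Abstract form of the duality (Aubin–Nitsche) estimate, Lemma 5.2:
`‖j w − j(S w)‖_L ≤ δ‖D w‖_Q` for all discretely divergence-free `w ∈ Vh0`, where `S` is the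
orthogonal projection onto the divergence-free subspace `V⁰ ⊆ ker D`, and `δ` encodes the
regularity of the dual Stokes problem combined with the pressure approximation property. -/
theorem duality_estimate
    {H L Q : Type*}
    [NormedAddCommGroup H] [InnerProductSpace ℝ H] [CompleteSpace H]
    [NormedAddCommGroup L] [InnerProductSpace ℝ L] [CompleteSpace L]
    [NormedAddCommGroup Q] [InnerProductSpace ℝ Q] [CompleteSpace Q]
    (j : H →L[ℝ] L) (D : H →L[ℝ] Q)
    (V0 : Submodule ℝ H) (hV0closed : IsClosed (V0 : Set H))
    (hV0kerD : ∀ w ∈ V0, D w = 0)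
    -- `S` is the orthogonal projection of `H` onto `V0`
    (S : H → H) (hSmem : ∀ x, S x ∈ V0) (hSorth : ∀ x, x - S x ∈ V0ᗮ)
    (Qh : Submodule ℝ Q) (hQhclosed : IsClosed (Qh : Set Q))
    -- `πh` is the orthogonal projection of `Q` onto `Qh`
    (πh : Q → Q) (hπmem : ∀ q, πh q ∈ Qh) (hπorth : ∀ q, q - πh q ∈ Qhᗮ)
    (Vh0 : Submodule ℝ H) (hVh0closed : IsClosed (Vh0 : Set H))
    (hdiscdivfree : ∀ w ∈ Vh0, πh (D w) = 0)
    (δ : ℝ) (hδ : 0 ≤ δ)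
    -- solvability of the dual Stokes problem with the corresponding regularity estimate
    (hdual : ∀ z : L, ∃ ψ ∈ V0, ∃ r : Q,
      (∀ y : H, ⟪ψ, y⟫ - ⟪r, D y⟫ = ⟪z, j y⟫) ∧ ‖r - πh r‖ ≤ δ * ‖z‖) :
    ∀ w ∈ Vh0, ‖j w - j (S w)‖ ≤ δ * ‖D w‖ := by
  intro w hw
  obtain ⟨ψ, hψ, r, heq, hr⟩ := hdual (j w - j (S w))
  have h1 := heq (w - S w)
  have hψ0 : ⟪ψ, w - S w⟫ = 0 := (Submodule.mem_orthogonal V0 _).1 (hSorth w) ψ hψ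
  -- `D w` is its own residual under `πh`, hence orthogonal to `Qh`.
  have hDw : D w ∈ Qhᗮ := by simpa [hdiscdivfree w hw] using hπorth (D w)
  have hπ0 : ⟪πh r, D w⟫ = 0 := (Submodule.mem_orthogonal Qh _).1 hDw _ (hπmem r)
  rw [hψ0, map_sub, map_sub, hV0kerD _ (hSmem w), sub_zero, real_inner_self_eq_norm_sq] at h1
  have h2 : ⟪r - πh r, D w⟫ = ⟪r, D w⟫ := by rw [inner_sub_left, hπ0, sub_zero]
  have h3 := (abs_le.1 (abs_real_inner_le_norm (r - πh r) (D w))).1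
  have h4 := mul_le_mul_of_nonneg_right hr (norm_nonneg (D w))
  rcases (norm_nonneg (j w - j (S w))).eq_or_lt with h0 | hpos
  · rw [← h0]
    positivity
  · refine le_of_mul_le_mul_right ?_ hpos
    nlinarith
end

section
/- Let H, L, Q be real Hilbert spaces, j : H → L a bounded linear map, L_σ a closed subspace of L with orthogonal projection P : L → L, and D : H → Q a bounded linear map with ‖D w‖_Q ≤ ‖w‖_H for all w ∈ H. Let V⁰ be a closed subspace of H with j(V⁰) ⊆ L_σ and V⁰ ⊆ ker D, with orthogonal projection S : H → H onto V⁰. Let Q_h be a closed subspace of Q with orthogonal projection π_h : Q → Q, and let V_h⁰ be a closed subspace of H such that π_h(D w) = 0 for all w ∈ V_h⁰, with orthogonal projection S_h : H → H onto V_h⁰. Assume the duality estimate ‖j w − j(S w)‖_L ≤ ε₂·‖w‖_H for all w ∈ V_h⁰, with ε₂ ≥ 0. Let ν > 0, f ∈ L, and suppose there are α ∈ Q and δ_π ≥ 0 with ⟨f − P f, j w⟩_L = −⟨α, D w⟩_Q for all w ∈ H and ‖α − π_h α‖_Q ≤ δ_π·‖f − P f‖_L. If v ∈ V⁰ satisfies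 ν·⟨v, w⟩_H = ⟨f, j w⟩_L for all w ∈ V⁰, and v_h ∈ V_h⁰ satisfies ν·⟨v_h, w⟩_H = ⟨f, j w⟩_L for all w ∈ V_h⁰, then ‖v_h − S_h(v)‖_H ≤ ε₂·ν⁻¹·‖P f‖_L + δ_π·ν⁻¹·‖f − P f‖_L. -/
open RealInnerProductSpace

/-!
Put `w = vh - Sh v ∈ Vh0`. Testing the discrete equation with `w`, and the continuous one with
`S w`, gives `ν ‖w‖² = ⟪f, j w⟫ - ⟪f, j (S w)⟫`. Splitting `f = P f + (f - P f)`, the solenoidal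
part contributes `⟪P f, j w - j (S w)⟫`, controlled by the duality estimate. The gradient part
contributes `⟪f - P f, j w⟫ = -⟪α, D w⟫` only, since `j (S w) ∈ Lσ`; as `D w ⊥ Qh`, this equals
`-⟪α - πh α, D w⟫`, controlled by the approximation property of `πh`. Dividing by `ν ‖w‖`
concludes.
-/

/-- Abstract form of Theorem 6.1 (quasi-optimal consistency error estimate for classical
conforming mixed methods): `‖v_h − S_h(v)‖_H ≤ ε₂ ν⁻¹‖P f‖_L + δ_π ν⁻¹‖f − P f‖_L`,
where `ε₂` abstracts `C₂ hˢ` of the duality estimate and `δ_π` abstracts `C_{π_h,1} h`. -/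
theorem consistency_error_estimate_classical
    {H L Q : Type*}
    [NormedAddCommGroup H] [InnerProductSpace ℝ H] [CompleteSpace H]
    [NormedAddCommGroup L] [InnerProductSpace ℝ L] [CompleteSpace L]
    [NormedAddCommGroup Q] [InnerProductSpace ℝ Q] [CompleteSpace Q]
    (j : H →L[ℝ] L)
    (Lσ : Submodule ℝ L) (hLσclosed : IsClosed (Lσ : Set L))
    -- `P` is the orthogonal projection of `L` onto `Lσ`
    (P : L → L) (hPmem : ∀ x, P x ∈ Lσ) (hPorth : ∀ x, x - P x ∈ Lσᗮ)
    (D : H →L[ℝ] Q) (hD : ∀ w : H, ‖D w‖ ≤ ‖w‖)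
    (V0 : Submodule ℝ H) (hV0closed : IsClosed (V0 : Set H))
    (hjV0 : ∀ w ∈ V0, j w ∈ Lσ) (hV0kerD : ∀ w ∈ V0, D w = 0)
    -- `S` is the orthogonal projection of `H` onto `V0` (continuous Stokes projector)
    (S : H → H) (hSmem : ∀ x, S x ∈ V0) (hSorth : ∀ x, x - S x ∈ V0ᗮ)
    (Qh : Submodule ℝ Q) (hQhclosed : IsClosed (Qh : Set Q))
    -- `πh` is the orthogonal projection of `Q` onto `Qh`
    (πh : Q → Q) (hπmem : ∀ q, πh q ∈ Qh) (hπorth : ∀ q, q - πh q ∈ Qhᗮ)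
    (Vh0 : Submodule ℝ H) (hVh0closed : IsClosed (Vh0 : Set H))
    (hdiscdivfree : ∀ w ∈ Vh0, πh (D w) = 0)
    -- `Sh` is the orthogonal projection of `H` onto `Vh0` (discrete Stokes projector)
    (Sh : H → H) (hShmem : ∀ x, Sh x ∈ Vh0) (hShorth : ∀ x, x - Sh x ∈ Vh0ᗮ)
    (ε₂ : ℝ) (hε₂ : 0 ≤ ε₂)
    (hduality : ∀ w ∈ Vh0, ‖j w - j (S w)‖ ≤ ε₂ * ‖w‖)
    (ν : ℝ) (hν : 0 < ν) (f : L)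
    (α : Q) (δπ : ℝ) (hδπ : 0 ≤ δπ)
    (hα : ∀ w : H, ⟪f - P f, j w⟫ = -⟪α, D w⟫)
    (hαapprox : ‖α - πh α‖ ≤ δπ * ‖f - P f‖)
    (v : H) (hv : v ∈ V0)
    (hweak : ∀ w ∈ V0, ν * ⟪v, w⟫ = ⟪f, j w⟫)
    (vh : H) (hvh : vh ∈ Vh0)
    (hweakh : ∀ w ∈ Vh0, ν * ⟪vh, w⟫ = ⟪f, j w⟫) :
    ‖vh - Sh v‖ ≤ ε₂ * ν⁻¹ * ‖P f‖ + δπ * ν⁻¹ * ‖f - P f‖ := by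
  set w := vh - Sh v with hw
  have hwm : w ∈ Vh0 := Vh0.sub_mem hvh (hShmem v)
  have h_Sh : ⟪v - Sh v, w⟫ = 0 := Submodule.inner_left_of_mem_orthogonal hwm (hShorth v)
  have h_S : ⟪v, w - S w⟫ = 0 := Submodule.inner_right_of_mem_orthogonal hv (hSorth w)
  have h_P : ⟪f - P f, j (S w)⟫ = 0 :=
    Submodule.inner_left_of_mem_orthogonal (hjV0 _ (hSmem w)) (hPorth f)
  have h_π : ⟪πh α, D w⟫ = 0 := by
    have h := hπorth (D w)
    rw [hdiscdivfree w hwm, sub_zero] at h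
    exact Submodule.inner_right_of_mem_orthogonal (hπmem α) h
  have h_vh := hweakh w hwm
  have h_v := hweak (S w) (hSmem w)
  have h_α := hα w
  have h_error : ν * ‖w‖ ^ 2 = ⟪P f, j w - j (S w)⟫ - ⟪α - πh α, D w⟫ := by
    have h_sq : ‖w‖ ^ 2 = ⟪vh, w⟫ - ⟪Sh v, w⟫ := by
      rw [← inner_sub_left, ← hw, real_inner_self_eq_norm_sq]
    rw [h_sq]
    simp only [inner_sub_left, inner_sub_right] at h_Sh h_S h_P h_α ⊢
    linear_combination h_vh + ν * h_Sh - ν * h_S - h_v + h_α - h_P - h_π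
  have h_sol : ⟪P f, j w - j (S w)⟫ ≤ ‖P f‖ * (ε₂ * ‖w‖) :=
    (real_inner_le_norm _ _).trans (by gcongr; exact hduality w hwm)
  have h_grad : -⟪α - πh α, D w⟫ ≤ δπ * ‖f - P f‖ * ‖w‖ := by
    refine (neg_le_abs _).trans ((abs_real_inner_le_norm _ _).trans ?_)
    gcongr
    exact hD w
  have h_bound : ν * ‖w‖ ≤ ε₂ * ‖P f‖ + δπ * ‖f - P f‖ := by
    rcases (norm_nonneg w).eq_or_lt with h0 | h0
    · rw [← h0]
      simp only [mul_zero]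
      positivity
    · refine le_of_mul_le_mul_right ?_ h0
      linarith
  calc ‖w‖ = ν⁻¹ * (ν * ‖w‖) := by field_simp
    _ ≤ ν⁻¹ * (ε₂ * ‖P f‖ + δπ * ‖f - P f‖) := by gcongr
    _ = ε₂ * ν⁻¹ * ‖P f‖ + δπ * ν⁻¹ * ‖f - P f‖ := by ring
end

section
/- Under the hypotheses of the classical consistency error estimate — namely: H, L, Q real Hilbert spaces, j : H → L bounded linear, L_σ ⊆ L closed with orthogonal projection P, D : H → Q bounded linear with ‖D w‖_Q ≤ ‖w‖_H for all w ∈ H; V⁰ ⊆ H closed with j(V⁰) ⊆ L_σ, V⁰ ⊆ ker D, and orthogonal projection S onto V⁰; Q_h ⊆ Q closed with orthogonal projection π_h; V_h⁰ ⊆ V_h closed subspaces of H with π_h(D w) = 0 for all w ∈ V_h⁰ and orthogonal projection S_h onto V_h⁰; ‖j w − j(S w)‖_L ≤ ε₂‖w‖_H for all w ∈ V_h⁰; ν > 0, f ∈ L, α ∈ Q with ⟨f − Pf, j w⟩_L = −⟨α, D w⟩_Q for all w ∈ H and ‖α − π_h α‖_Q ≤ δ_π‖f − Pf‖_L; v ∈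 V⁰ with ν⟨v, w⟩_H = ⟨f, j w⟩_L for all w ∈ V⁰ and v_h ∈ V_h⁰ with ν⟨v_h, w⟩_H = ⟨f, j w⟩_L for all w ∈ V_h⁰ — assume in addition the best-approximation property ‖v − S_h(v)‖_H ≤ C_F'·inf_{w ∈ V_h} ‖v − w‖_H for some C_F' ≥ 1. Then ‖v − v_h‖²_H ≤ C_F'²·(inf_{w ∈ V_h} ‖v − w‖_H)² + (ε₂·ν⁻¹·‖P f‖_L + δ_π·ν⁻¹·‖f − P f‖_L)². -/
/-!
Set `e = v_h - S_h v`, an element of `V_h⁰`. Since `v - S_h v ⊥ V_h⁰`, Pythagoras gives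
`‖v - v_h‖² = ‖v - S_h v‖² + ‖e‖²`; the first term is the best-approximation hypothesis.
For the consistency error `e`, testing the discrete equation with `e` and the continuous one
with `S e` gives `ν‖e‖² = ⟪f, j e - j (S e)⟫`. Splitting `f = P f + (f - P f)`, the part along
`P f` is controlled by the duality estimate. In the gradient part, `j (S e) ∈ L_σ` drops out and
`⟪f - P f, j e⟫ = -⟪α - π_h α, D e⟫` because `D e ⊥ Q_h`, which brings in the pressure
approximation. Dividing by `ν‖e‖` bounds `‖e‖`.
-/

open RealInnerProductSpace

/-- Abstract form of Theorem 6.3 (a priori error estimate for classical conforming mixed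
methods): `‖v − v_h‖² ≤ C_F'²(inf_{w ∈ V_h}‖v − w‖)² + (ε₂ν⁻¹‖Pf‖ + δ_πν⁻¹‖f − Pf‖)²`. -/
theorem a_priori_error_estimate_classical
    {H L Q : Type*}
    [NormedAddCommGroup H] [InnerProductSpace ℝ H] [CompleteSpace H]
    [NormedAddCommGroup L] [InnerProductSpace ℝ L] [CompleteSpace L]
    [NormedAddCommGroup Q] [InnerProductSpace ℝ Q] [CompleteSpace Q]
    (j : H →L[ℝ] L)
    (Lσ : Submodule ℝ L) (hLσclosed : IsClosed (Lσ : Set L))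
    -- `P` is the orthogonal projection of `L` onto `Lσ`
    (P : L → L) (hPmem : ∀ x, P x ∈ Lσ) (hPorth : ∀ x, x - P x ∈ Lσᗮ)
    (D : H →L[ℝ] Q) (hD : ∀ w : H, ‖D w‖ ≤ ‖w‖)
    (V0 : Submodule ℝ H) (hV0closed : IsClosed (V0 : Set H))
    (hjV0 : ∀ w ∈ V0, j w ∈ Lσ) (hV0kerD : ∀ w ∈ V0, D w = 0)
    -- `S` is the orthogonal projection of `H` onto `V0` (continuous Stokes projector)
    (S : H → H) (hSmem : ∀ x, S x ∈ V0) (hSorth : ∀ x, x - S x ∈ V0ᗮ)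
    (Qh : Submodule ℝ Q) (hQhclosed : IsClosed (Qh : Set Q))
    -- `πh` is the orthogonal projection of `Q` onto `Qh`
    (πh : Q → Q) (hπmem : ∀ q, πh q ∈ Qh) (hπorth : ∀ q, q - πh q ∈ Qhᗮ)
    (Vh0 Vh : Submodule ℝ H) (hVh0Vh : Vh0 ≤ Vh)
    (hVh0closed : IsClosed (Vh0 : Set H)) (hVhclosed : IsClosed (Vh : Set H))
    (hdiscdivfree : ∀ w ∈ Vh0, πh (D w) = 0)
    -- `Sh` is the orthogonal projection of `H` onto `Vh0` (discrete Stokes projector)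
    (Sh : H → H) (hShmem : ∀ x, Sh x ∈ Vh0) (hShorth : ∀ x, x - Sh x ∈ Vh0ᗮ)
    (ε₂ : ℝ) (hε₂ : 0 ≤ ε₂)
    (hduality : ∀ w ∈ Vh0, ‖j w - j (S w)‖ ≤ ε₂ * ‖w‖)
    (ν : ℝ) (hν : 0 < ν) (f : L)
    (α : Q) (δπ : ℝ) (hδπ : 0 ≤ δπ)
    (hα : ∀ w : H, ⟪f - P f, j w⟫ = -⟪α, D w⟫)
    (hαapprox : ‖α - πh α‖ ≤ δπ * ‖f - P f‖)
    (v : H) (hv : v ∈ V0)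
    (hweak : ∀ w ∈ V0, ν * ⟪v, w⟫ = ⟪f, j w⟫)
    (vh : H) (hvh : vh ∈ Vh0)
    (hweakh : ∀ w ∈ Vh0, ν * ⟪vh, w⟫ = ⟪f, j w⟫)
    (C_F' : ℝ) (hC_F' : 1 ≤ C_F')
    (hbestapprox : ‖v - Sh v‖ ≤ C_F' * ⨅ w : Vh, ‖v - (w : H)‖) :
    ‖v - vh‖ ^ 2 ≤ C_F' ^ 2 * (⨅ w : Vh, ‖v - (w : H)‖) ^ 2
      + (ε₂ * ν⁻¹ * ‖P f‖ + δπ * ν⁻¹ * ‖f - P f‖) ^ 2 := by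
  have heM : vh - Sh v ∈ Vh0 := Vh0.sub_mem hvh (hShmem v)
  obtain ⟨e, he⟩ : ∃ e, e = vh - Sh v := ⟨_, rfl⟩
  rw [← he] at heM
  have horth : ⟪v - Sh v, e⟫ = 0 := Submodule.inner_left_of_mem_orthogonal heM (hShorth v)
  have hpyth : ‖v - vh‖ ^ 2 = ‖v - Sh v‖ ^ 2 + ‖e‖ ^ 2 := by
    have h : v - vh = (v - Sh v) - e := by rw [he]; abel
    rw [h, norm_sub_sq_real, horth]
    ring
  have hvS : ⟪v, e⟫ = ⟪v, S e⟫ := by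
    have h : ⟪v, e - S e⟫ = 0 := Submodule.inner_right_of_mem_orthogonal hv (hSorth e)
    rw [inner_sub_right] at h
    linarith
  have hgrad : ⟪f - P f, j (S e)⟫ = 0 :=
    Submodule.inner_left_of_mem_orthogonal (hjV0 _ (hSmem e)) (hPorth f)
  have hDe : ⟪πh α, D e⟫ = 0 := by
    -- `D e = D e - π_h (D e)` lies in the orthogonal complement of `Q_h`.
    have h := hπorth (D e)
    rw [hdiscdivfree e heM, sub_zero] at h
    exact Submodule.inner_right_of_mem_orthogonal (hπmem α) h
  have hid : ν * ‖e‖ ^ 2 = ⟪P f, j e - j (S e)⟫ - ⟪α - πh α, D e⟫ := by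
    have h1 := hweakh e heM
    have h2 := hweak (S e) (hSmem e)
    have h3 := hα e
    have h4 : ‖e‖ ^ 2 = ⟪vh, e⟫ - ⟪Sh v, e⟫ := by
      rw [← inner_sub_left, ← he, real_inner_self_eq_norm_sq]
    rw [inner_sub_left] at horth hgrad h3
    rw [inner_sub_right, inner_sub_left, h4]
    linear_combination h1 - h2 + ν * horth - ν * hvS + h3 - hgrad - hDe
  have hbound : ν * ‖e‖ ^ 2 ≤ (ε₂ * ‖P f‖ + δπ * ‖f - P f‖) * ‖e‖ := by
    have h1 : ⟪P f, j e - j (S e)⟫ ≤ ‖P f‖ * (ε₂ * ‖e‖) :=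
      (real_inner_le_norm _ _).trans
        (mul_le_mul_of_nonneg_left (hduality e heM) (norm_nonneg _))
    have h2 : -⟪α - πh α, D e⟫ ≤ δπ * ‖f - P f‖ * ‖e‖ :=
      ((neg_le_abs _).trans (abs_real_inner_le_norm _ _)).trans
        (mul_le_mul hαapprox (hD e) (norm_nonneg _) (by positivity))
    rw [hid]
    linarith
  have hcons : ‖e‖ ≤ ε₂ * ν⁻¹ * ‖P f‖ + δπ * ν⁻¹ * ‖f - P f‖ := by
    rcases (norm_nonneg e).eq_or_lt with h0 | hpos
    · rw [← h0]
      positivity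
    · have h : ν * ‖e‖ ≤ ε₂ * ‖P f‖ + δπ * ‖f - P f‖ := by
        refine le_of_mul_le_mul_right ?_ hpos
        linarith [hbound]
      have h' : ‖e‖ ≤ (ε₂ * ‖P f‖ + δπ * ‖f - P f‖) / ν := by
        rw [le_div_iff₀ hν]
        linarith
      refine h'.trans_eq ?_
      rw [div_eq_mul_inv]
      ring
  rw [hpyth, ← mul_pow]
  gcongr
end

section
/- Let H and L be real Hilbert spaces, j : H → L a bounded linear map, L_σ a closed subspace of L with orthogonal projection P : L → L. Let V⁰ be a closed subspace of H with j(V⁰) ⊆ L_σ and orthogonal projection S : H → H onto V⁰, and let V_h⁰ be a closed subspace of H with orthogonal projection S_h : H → H onto V_h⁰. Let I_h : V_h⁰ → L be a linear map with I_h(V_h⁰) ⊆ L_σ and ‖j w − I_h w‖_L ≤ ε₁·‖w‖_H for all w ∈ V_h⁰, where ε₁ ≥ 0, and assume the duality estimate ‖j w − j(S w)‖_L ≤ ε₂·‖w‖_H for all w ∈ V_h⁰, where ε₂ ≥ 0. Let ν > 0, f ∈ L. If v ∈ V⁰ satisfies ν·⟨v, w⟩_H = ⟨f, j w⟩_L for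 all w ∈ V⁰, and v_h ∈ V_h⁰ satisfies ν·⟨v_h, w⟩_H = ⟨f, I_h w⟩_L for all w ∈ V_h⁰, then ‖v_h − S_h(v)‖_H ≤ (ε₁ + ε₂)·ν⁻¹·‖P f‖_L. In particular the bound depends only on the Helmholtz–Hodge projector P f and not on f − P f, and ν⁻¹‖P f‖_L is independent of ν since it equals the norm of the representer of −Δv on V⁰. -/
/-!
The error `w = vh - Sh v` lies in `Vh0`, so it is an admissible discrete test function. Since
`Sh` and `S` are orthogonal projections, `⟪Sh v, w⟫ = ⟪v, w⟫ = ⟪v, S w⟫`, and the two weak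
formulations give `ν ‖w‖² = ⟪f, Ih w - j (S w)⟫`. Both `Ih w` and `j (S w)` lie in `Lσ`, so `f`
may be replaced by `P f`. Inserting `j w` and using Cauchy–Schwarz bounds the right-hand side by
`‖P f‖ (ε₁ + ε₂) ‖w‖`; dividing by `ν ‖w‖` yields the estimate.
-/

open RealInnerProductSpace

/-- Abstract form of Theorem 7.1 (pressure-robust consistency error estimate):
`‖v_h − S_h(v)‖_H ≤ (ε₁ + ε₂)ν⁻¹‖P f‖_L`, where `I_h` is the reconstruction operator
(`ε₁` abstracting `C₁h`) and `ε₂` abstracts `C₂hˢ` of the duality estimate. The bound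
depends only on the Helmholtz–Hodge projector `P f`; moreover `ν⁻¹‖P f‖` is independent
of `ν`, being the norm of the representer of `−Δv` on `V⁰`. -/
theorem consistency_error_estimate_pressure_robust
    {H L : Type*}
    [NormedAddCommGroup H] [InnerProductSpace ℝ H] [CompleteSpace H]
    [NormedAddCommGroup L] [InnerProductSpace ℝ L] [CompleteSpace L]
    (j : H →L[ℝ] L)
    (Lσ : Submodule ℝ L) (hLσclosed : IsClosed (Lσ : Set L))
    -- `P` is the orthogonal projection of `L` onto `Lσ`
    (P : L → L) (hPmem : ∀ x, P x ∈ Lσ) (hPorth : ∀ x, x - P x ∈ Lσᗮ)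
    (V0 : Submodule ℝ H) (hV0closed : IsClosed (V0 : Set H))
    (hjV0 : ∀ w ∈ V0, j w ∈ Lσ)
    -- `S` is the orthogonal projection of `H` onto `V0` (continuous Stokes projector)
    (S : H → H) (hSmem : ∀ x, S x ∈ V0) (hSorth : ∀ x, x - S x ∈ V0ᗮ)
    (Vh0 : Submodule ℝ H) (hVh0closed : IsClosed (Vh0 : Set H))
    -- `Sh` is the orthogonal projection of `H` onto `Vh0` (discrete Stokes projector)
    (Sh : H → H) (hShmem : ∀ x, Sh x ∈ Vh0) (hShorth : ∀ x, x - Sh x ∈ Vh0ᗮ)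
    (Ih : Vh0 →ₗ[ℝ] L) (hIhLσ : ∀ w : Vh0, Ih w ∈ Lσ)
    (ε₁ : ℝ) (hε₁ : 0 ≤ ε₁)
    (hIh : ∀ w : Vh0, ‖j (w : H) - Ih w‖ ≤ ε₁ * ‖(w : H)‖)
    (ε₂ : ℝ) (hε₂ : 0 ≤ ε₂)
    (hduality : ∀ w ∈ Vh0, ‖j w - j (S w)‖ ≤ ε₂ * ‖w‖)
    (ν : ℝ) (hν : 0 < ν) (f : L)
    (v : H) (hv : v ∈ V0)
    (hweak : ∀ w ∈ V0, ν * ⟪v, w⟫ = ⟪f, j w⟫)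
    (vh : H) (hvh : vh ∈ Vh0)
    (hweakh : ∀ w : Vh0, ν * ⟪vh, (w : H)⟫ = ⟪f, Ih w⟫) :
    ‖vh - Sh v‖ ≤ (ε₁ + ε₂) * ν⁻¹ * ‖P f‖ := by
  set w : H := vh - Sh v with hw
  have hwmem : w ∈ Vh0 := Vh0.sub_mem hvh (hShmem v)
  -- Only `P f` is seen by test functions in `Lσ`.
  have hPf : ∀ y ∈ Lσ, ⟪f, y⟫ = ⟪P f, y⟫ := fun y hy => by
    have h := Submodule.inner_left_of_mem_orthogonal hy (hPorth f)
    rw [inner_sub_left] at h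
    linarith
  have hSh : ⟪v, w⟫ = ⟪Sh v, w⟫ := by
    have h := Submodule.inner_left_of_mem_orthogonal hwmem (hShorth v)
    rw [inner_sub_left] at h
    linarith
  have hS : ⟪v, w⟫ = ⟪v, S w⟫ := by
    have h := Submodule.inner_right_of_mem_orthogonal hv (hSorth w)
    rw [inner_sub_right] at h
    linarith
  have herr : ν * ‖w‖ ^ 2 = ⟪P f, Ih ⟨w, hwmem⟩ - j (S w)⟫ := by
    have h1 := hweakh ⟨w, hwmem⟩
    have h2 := hweak (S w) (hSmem w)
    rw [hPf _ (hIhLσ _)] at h1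
    rw [hPf _ (hjV0 _ (hSmem w)), ← hS, hSh] at h2
    have h3 : ‖w‖ ^ 2 = ⟪vh, w⟫ - ⟪Sh v, w⟫ := by
      rw [← inner_sub_left, ← hw, real_inner_self_eq_norm_sq]
    rw [inner_sub_right, h3, mul_sub, ← h1, ← h2]
  have hcons : ‖Ih ⟨w, hwmem⟩ - j (S w)‖ ≤ (ε₁ + ε₂) * ‖w‖ := by
    have h1 := hIh ⟨w, hwmem⟩
    rw [norm_sub_rev] at h1
    have h2 := norm_sub_le_norm_sub_add_norm_sub (Ih ⟨w, hwmem⟩) (j w) (j (S w))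
    have h3 := hduality w hwmem
    dsimp only at h1
    linarith
  have hbound : ν * ‖w‖ ^ 2 ≤ ‖P f‖ * ((ε₁ + ε₂) * ‖w‖) :=
    herr.trans_le <| (real_inner_le_norm _ _).trans <|
      mul_le_mul_of_nonneg_left hcons (norm_nonneg _)
  rcases (norm_nonneg w).eq_or_lt with h0 | hpos
  · rw [← h0]
    positivity
  · have h : ν * ‖w‖ ≤ (ε₁ + ε₂) * ‖P f‖ := by
      refine le_of_mul_le_mul_right ?_ hpos
      linarith
    calc ‖w‖ = ν⁻¹ * (ν * ‖w‖) := by field_simp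
      _ ≤ ν⁻¹ * ((ε₁ + ε₂) * ‖P f‖) := by gcongr
      _ = (ε₁ + ε₂) * ν⁻¹ * ‖P f‖ := by ring
end

section
/- Under the hypotheses of the pressure-robust consistency error estimate — namely: H, L real Hilbert spaces, j : H → L bounded linear, L_σ ⊆ L closed with orthogonal projection P; V⁰ ⊆ H closed with j(V⁰) ⊆ L_σ and orthogonal projection S onto V⁰; V_h⁰ ⊆ V_h closed subspaces of H with orthogonal projection S_h onto V_h⁰; I_h : V_h⁰ → L linear with I_h(V_h⁰) ⊆ L_σ and ‖j w − I_h w‖_L ≤ ε₁‖w‖_H for all w ∈ V_h⁰; ‖j w − j(S w)‖_L ≤ ε₂‖w‖_H for all w ∈ V_h⁰; ν > 0, f ∈ L; v ∈ V⁰ with ν⟨v, w⟩_H = ⟨f, j w⟩_L for all w ∈ V⁰ and v_h ∈ V_h⁰ with ν⟨v_h, w⟩_H = ⟨f, I_h w⟩_L for all w ∈ V_h⁰ — assume in addition the best-approximation property ‖v − S_h(v)‖_H ≤ C_F'·inf_{w ∈ V_h} ‖v − w‖_H for some C_F' ≥ 1. Then ‖v − v_h‖²_H ≤ C_F'²·(inf_{w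 ∈ V_h} ‖v − w‖_H)² + ((ε₁ + ε₂)·ν⁻¹·‖P f‖_L)². -/
/-!
The discrete consistency error `w = vh - Sh v` lies in `Vh0`. Testing both weak formulations gives
`ν ‖w‖² = ⟪f, Ih w - j (S w)⟫`, because `⟪Sh v, w⟫ = ⟪v, w⟫ = ⟪v, S w⟫`. The field
`Ih w - j (S w)` lies in `Lσ`, so `f` may be replaced by `P f`; this is where pressure-robustness
comes from. The approximation property of `Ih` and the duality estimate then yield
`‖w‖ ≤ (ε₁ + ε₂) ν⁻¹ ‖P f‖`. Since `v - Sh v` is orthogonal to `Vh0`, Pythagoras combines this with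
the best-approximation bound.
-/

open RealInnerProductSpace

/-- Abstract form of Theorem 7.2 (pressure-robust a priori error estimate):
`‖v − v_h‖² ≤ C_F'²(inf_{w ∈ V_h}‖v − w‖)² + ((ε₁ + ε₂)ν⁻¹‖P f‖)²`. -/
theorem a_priori_error_estimate_pressure_robust
    {H L : Type*}
    [NormedAddCommGroup H] [InnerProductSpace ℝ H] [CompleteSpace H]
    [NormedAddCommGroup L] [InnerProductSpace ℝ L] [CompleteSpace L]
    (j : H →L[ℝ] L)
    (Lσ : Submodule ℝ L) (hLσclosed : IsClosed (Lσ : Set L))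
    -- `P` is the orthogonal projection of `L` onto `Lσ`
    (P : L → L) (hPmem : ∀ x, P x ∈ Lσ) (hPorth : ∀ x, x - P x ∈ Lσᗮ)
    (V0 : Submodule ℝ H) (hV0closed : IsClosed (V0 : Set H))
    (hjV0 : ∀ w ∈ V0, j w ∈ Lσ)
    -- `S` is the orthogonal projection of `H` onto `V0` (continuous Stokes projector)
    (S : H → H) (hSmem : ∀ x, S x ∈ V0) (hSorth : ∀ x, x - S x ∈ V0ᗮ)
    (Vh0 Vh : Submodule ℝ H) (hVh0Vh : Vh0 ≤ Vh)
    (hVh0closed : IsClosed (Vh0 : Set H)) (hVhclosed : IsClosed (Vh : Set H))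
    -- `Sh` is the orthogonal projection of `H` onto `Vh0` (discrete Stokes projector)
    (Sh : H → H) (hShmem : ∀ x, Sh x ∈ Vh0) (hShorth : ∀ x, x - Sh x ∈ Vh0ᗮ)
    (Ih : Vh0 →ₗ[ℝ] L) (hIhLσ : ∀ w : Vh0, Ih w ∈ Lσ)
    (ε₁ : ℝ) (hε₁ : 0 ≤ ε₁)
    (hIh : ∀ w : Vh0, ‖j (w : H) - Ih w‖ ≤ ε₁ * ‖(w : H)‖)
    (ε₂ : ℝ) (hε₂ : 0 ≤ ε₂)
    (hduality : ∀ w ∈ Vh0, ‖j w - j (S w)‖ ≤ ε₂ * ‖w‖)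
    (ν : ℝ) (hν : 0 < ν) (f : L)
    (v : H) (hv : v ∈ V0)
    (hweak : ∀ w ∈ V0, ν * ⟪v, w⟫ = ⟪f, j w⟫)
    (vh : H) (hvh : vh ∈ Vh0)
    (hweakh : ∀ w : Vh0, ν * ⟪vh, (w : H)⟫ = ⟪f, Ih w⟫)
    (C_F' : ℝ) (hC_F' : 1 ≤ C_F')
    (hbestapprox : ‖v - Sh v‖ ≤ C_F' * ⨅ w : Vh, ‖v - (w : H)‖) :
    ‖v - vh‖ ^ 2 ≤ C_F' ^ 2 * (⨅ w : Vh, ‖v - (w : H)‖) ^ 2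
      + ((ε₁ + ε₂) * ν⁻¹ * ‖P f‖) ^ 2 := by
  have hw : vh - Sh v ∈ Vh0 := Vh0.sub_mem hvh (hShmem v)
  obtain ⟨w, hwdef⟩ : ∃ w, w = vh - Sh v := ⟨_, rfl⟩
  rw [← hwdef] at hw
  have h1 : ⟪v - Sh v, w⟫ = 0 := Submodule.inner_left_of_mem_orthogonal hw (hShorth v)
  have h2 : ⟪v, w - S w⟫ = 0 := Submodule.inner_right_of_mem_orthogonal hv (hSorth w)
  have hmem : Ih ⟨w, hw⟩ - j (S w) ∈ Lσ := Lσ.sub_mem (hIhLσ _) (hjV0 _ (hSmem w))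
  have h3 : ⟪f - P f, Ih ⟨w, hw⟩ - j (S w)⟫ = 0 :=
    Submodule.inner_left_of_mem_orthogonal hmem (hPorth f)
  have h4 := hweakh ⟨w, hw⟩
  have h5 := hweak (S w) (hSmem w)
  have h6 : ν * ‖w‖ ^ 2 = ⟪P f, Ih ⟨w, hw⟩ - j (S w)⟫ := by
    have h7 : ‖w‖ ^ 2 = ⟪vh, w⟫ - ⟪Sh v, w⟫ := by
      rw [← inner_sub_left, ← hwdef, real_inner_self_eq_norm_sq]
    rw [inner_sub_left] at h1 h3
    rw [inner_sub_right] at h2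
    rw [inner_sub_right f] at h3
    simp only at h4
    rw [h7]
    linear_combination h4 - h5 + h3 + ν * h1 - ν * h2
  have h8 : ‖Ih ⟨w, hw⟩ - j (S w)‖ ≤ (ε₁ + ε₂) * ‖w‖ := by
    have ha := hIh ⟨w, hw⟩
    have hb := hduality w hw
    have hc := norm_sub_le_norm_sub_add_norm_sub (Ih ⟨w, hw⟩) (j w) (j (S w))
    rw [norm_sub_rev (Ih ⟨w, hw⟩) (j w)] at hc
    simp only at ha
    linarith
  have h9 : ν * ‖w‖ ^ 2 ≤ ‖P f‖ * ((ε₁ + ε₂) * ‖w‖) := by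
    rw [h6]
    exact (real_inner_le_norm _ _).trans (mul_le_mul_of_nonneg_left h8 (norm_nonneg _))
  have h10 : ‖w‖ ≤ (ε₁ + ε₂) * ν⁻¹ * ‖P f‖ := by
    rcases (norm_nonneg w).eq_or_lt with h0 | h0
    · rw [← h0]
      positivity
    · have h11 : ν * ‖w‖ ≤ (ε₁ + ε₂) * ‖P f‖ := by
        refine le_of_mul_le_mul_right ?_ h0
        linarith
      calc ‖w‖ = ν⁻¹ * (ν * ‖w‖) := by field_simp
        _ ≤ ν⁻¹ * ((ε₁ + ε₂) * ‖P f‖) := by gcongr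
        _ = (ε₁ + ε₂) * ν⁻¹ * ‖P f‖ := by ring
  have hpyth : ‖v - vh‖ ^ 2 = ‖v - Sh v‖ ^ 2 + ‖w‖ ^ 2 := by
    have h12 : v - vh = (v - Sh v) - w := by rw [hwdef]; abel
    rw [h12, norm_sub_sq_real, h1]
    ring
  rw [hpyth, ← mul_pow]
  gcongr
end

section
/- Let H and L be real Hilbert spaces and j : H → L a bounded linear map. Let V⁰ be a closed subspace of H with orthogonal projection S : H → H onto V⁰, and let V_h⁰ ⊆ V_h be closed subspaces of H. Let E : V_h⁰ → V⁰ be a linear map and C_E ≥ 0, ε_E ≥ 0 constants such that for all w ∈ V_h⁰: (i) ⟨u, E w − w⟩_H = 0 for all u ∈ V_h; (ii) ‖E w‖_H ≤ C_E·‖w‖_H; (iii) ‖j(E w) − j w‖_L ≤ ε_E·‖w‖_H. Assume there is δ ≥ 0 such that for every z ∈ L there exist ψ ∈ V⁰ and ψ_h ∈ V_h with ⟨ψ, y⟩_H = ⟨z, j y⟩_L for all y ∈ V⁰ and ‖ψ − ψ_h‖_H ≤ δ·‖z‖_L. Then for every w ∈ V_h⁰ it holds ‖j w − j(S w)‖_L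 ≤ (ε_E + (1 + C_E)·δ)·‖w‖_H. -/
/-!
An Aubin–Nitsche duality argument. Split `j w - j (S w) = (j w - j (E w)) + z` with
`z = j (E w - S w)`. The first term is controlled by the approximation property of `E`.
For the second, `E w - S w` lies in `V0`, so the dual solution `ψ` with source `z` gives
`‖z‖² = ⟪ψ, E w - S w⟫ = ⟪ψ, E w - w⟫ = ⟪ψ - ψh, E w - w⟫`, using that `w - S w` is
orthogonal to `V0` and `E w - w` is orthogonal to `Vh`. Cauchy–Schwarz then yields
`‖z‖² ≤ δ ‖z‖ (1 + C_E) ‖w‖`.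
-/

open RealInnerProductSpace

/-- Abstract form of Lemma 8.1 (duality estimate for the nonconforming
Crouzeix–Raviart method): `‖j w − j(S w)‖_L ≤ (ε_E + (1 + C_E)δ)‖w‖_H` for all
discretely divergence-free `w ∈ Vh0`, where `E` abstracts the `H¹`-conforming
divergence-free smoothing operator and `δ` the dual-problem regularity data. -/
theorem duality_estimate_crouzeix_raviart
    {H L : Type*}
    [NormedAddCommGroup H] [InnerProductSpace ℝ H] [CompleteSpace H]
    [NormedAddCommGroup L] [InnerProductSpace ℝ L] [CompleteSpace L]
    (j : H →L[ℝ] L)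
    (V0 : Submodule ℝ H) (hV0closed : IsClosed (V0 : Set H))
    -- `S` is the orthogonal projection of `H` onto `V0`
    (S : H → H) (hSmem : ∀ x, S x ∈ V0) (hSorth : ∀ x, x - S x ∈ V0ᗮ)
    (Vh0 Vh : Submodule ℝ H) (hVh0Vh : Vh0 ≤ Vh)
    (hVh0closed : IsClosed (Vh0 : Set H)) (hVhclosed : IsClosed (Vh : Set H))
    -- the smoothing operator `E : Vh0 → V0` and its properties
    (E : Vh0 →ₗ[ℝ] H) (hEV0 : ∀ w : Vh0, E w ∈ V0)
    (C_E ε_E : ℝ) (hC_E : 0 ≤ C_E) (hε_E : 0 ≤ ε_E)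
    (hEorth : ∀ w : Vh0, ∀ u ∈ Vh, ⟪u, E w - (w : H)⟫ = 0)
    (hEbound : ∀ w : Vh0, ‖E w‖ ≤ C_E * ‖(w : H)‖)
    (hEapprox : ∀ w : Vh0, ‖j (E w) - j (w : H)‖ ≤ ε_E * ‖(w : H)‖)
    (δ : ℝ) (hδ : 0 ≤ δ)
    -- solvability of the dual problem with regularity/approximation estimate
    (hdual : ∀ z : L, ∃ ψ ∈ V0, ∃ ψh ∈ Vh,
      (∀ y ∈ V0, ⟪ψ, y⟫ = ⟪z, j y⟫) ∧ ‖ψ - ψh‖ ≤ δ * ‖z‖) :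
    ∀ w ∈ Vh0, ‖j w - j (S w)‖ ≤ (ε_E + (1 + C_E) * δ) * ‖w‖ := by
  intro w hw
  set e : H := E ⟨w, hw⟩ with he
  have heV : e ∈ V0 := hEV0 ⟨w, hw⟩
  -- `z` is the conforming part of the error; it serves as the source of the dual problem.
  set z : L := j (e - S w) with hz
  obtain ⟨ψ, hψ, ψh, hψh, hsol, happ⟩ := hdual z
  have hsq : ‖z‖ * ‖z‖ = ⟪ψ - ψh, e - w⟫ := by
    have h1 : ⟪ψ, e - S w⟫ = ⟪z, z⟫ := hsol _ (V0.sub_mem heV (hSmem w))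
    have h2 : ⟪ψ, w - S w⟫ = 0 := (Submodule.mem_orthogonal V0 _).1 (hSorth w) ψ hψ
    have h3 : ⟪ψh, e - w⟫ = 0 := hEorth ⟨w, hw⟩ ψh hψh
    rw [← real_inner_self_eq_norm_mul_norm, ← h1, inner_sub_left, h3, sub_zero,
      ← sub_add_sub_cancel e w (S w), inner_add_right, h2, add_zero]
  have hew : ‖e - w‖ ≤ (1 + C_E) * ‖w‖ := by
    have h1 : ‖e‖ ≤ C_E * ‖w‖ := hEbound ⟨w, hw⟩
    linarith [norm_sub_le e w]
  have hzz : ‖z‖ * ‖z‖ ≤ ((1 + C_E) * δ * ‖w‖) * ‖z‖ :=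
    calc ‖z‖ * ‖z‖ = ⟪ψ - ψh, e - w⟫ := hsq
      _ ≤ ‖ψ - ψh‖ * ‖e - w‖ := real_inner_le_norm _ _
      _ ≤ (δ * ‖z‖) * ((1 + C_E) * ‖w‖) := by gcongr
      _ = ((1 + C_E) * δ * ‖w‖) * ‖z‖ := by ring
  have hzle : ‖z‖ ≤ (1 + C_E) * δ * ‖w‖ := by
    rcases (norm_nonneg z).eq_or_lt with h0 | hpos
    · rw [← h0]; positivity
    · exact le_of_mul_le_mul_right hzz hpos
  have happrox : ‖j w - j e‖ ≤ ε_E * ‖w‖ := by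
    rw [norm_sub_rev]; exact hEapprox ⟨w, hw⟩
  calc ‖j w - j (S w)‖ = ‖(j w - j e) + z‖ := by rw [hz, map_sub, sub_add_sub_cancel]
    _ ≤ ‖j w - j e‖ + ‖z‖ := norm_add_le _ _
    _ ≤ (ε_E + (1 + C_E) * δ) * ‖w‖ := by linarith
end

section
/- Let H and L be real Hilbert spaces, j : H → L a bounded linear map, L_σ a closed subspace of L with orthogonal projection P : L → L. Let V⁰ be a closed subspace of H with j(V⁰) ⊆ L_σ and orthogonal projection S : H → H onto V⁰, and let V_h⁰ ⊆ V_h be closed subspaces of H with orthogonal projection S_h : H → H onto V_h⁰. Let I_h : V_h⁰ → L be linear with I_h(V_h⁰) ⊆ L_σ and ‖j w − I_h w‖_L ≤ ε₁·‖w‖_H for all w ∈ V_h⁰. Let E : V_h⁰ → V⁰ be a linear map with constants C_E ≥ 0, ε_E ≥ 0 such that for all w ∈ V_h⁰: ⟨u, E w − w⟩_H = 0 for all u ∈ V_h, ‖E w‖_H ≤ C_E‖w‖_H, and ‖j(E w) − j w‖_L ≤ ε_E‖w‖_H; and assume there is δ ≥ 0 such that for every z ∈ L there exist ψ ∈ V⁰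 and ψ_h ∈ V_h with ⟨ψ, y⟩_H = ⟨z, j y⟩_L for all y ∈ V⁰ and ‖ψ − ψ_h‖_H ≤ δ‖z‖_L. Let ν > 0, f ∈ L. If v ∈ V⁰ satisfies ν·⟨v, w⟩_H = ⟨f, j w⟩_L for all w ∈ V⁰, and v_h ∈ V_h⁰ satisfies ν·⟨v_h, w⟩_H = ⟨f, I_h w⟩_L for all w ∈ V_h⁰, then ‖v_h − S_h(v)‖_H ≤ (ε₁ + ε_E + (1 + C_E)·δ)·ν⁻¹·‖P f‖_L. -/
/-!
Test the discrete error `w = v_h - S_h v ∈ V_h⁰` with itself. Since `I_h w` and `j (E w)` lie in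
`L_σ`, the load `f` may be replaced by `P f`, and inserting `E w` as a test function for `v` gives
`ν ‖w‖² = ⟪P f, I_h w - j w⟫ + ⟪P f, j w - j (E w)⟫ + ν ⟪v, E w - w⟫`.
The first two terms are bounded by the approximation properties of `I_h` and `E`. For the third,
the dual solution `ψ` with datum `P f` is `ν v` itself, and `E w - w ⟂ V_h` allows subtracting
`ψ_h`, so that `ν ⟪v, E w - w⟫ = ⟪ψ - ψ_h, E w - w⟫ ≤ δ ‖P f‖ (1 + C_E) ‖w‖`.
-/

open RealInnerProductSpace

/-- Abstract form of the first estimate of Theorem 8.2 (pressure-robust consistency error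
estimate for the modified nonconforming Crouzeix–Raviart method):
`‖v_h − S_h(v)‖_H ≤ (ε₁ + ε_E + (1 + C_E)δ)ν⁻¹‖P f‖_L`. -/
theorem consistency_error_estimate_crouzeix_raviart_pressure_robust
    {H L : Type*}
    [NormedAddCommGroup H] [InnerProductSpace ℝ H] [CompleteSpace H]
    [NormedAddCommGroup L] [InnerProductSpace ℝ L] [CompleteSpace L]
    (j : H →L[ℝ] L)
    (Lσ : Submodule ℝ L) (hLσclosed : IsClosed (Lσ : Set L))
    -- `P` is the orthogonal projection of `L` onto `Lσ`
    (P : L → L) (hPmem : ∀ x, P x ∈ Lσ) (hPorth : ∀ x, x - P x ∈ Lσᗮ)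
    (V0 : Submodule ℝ H) (hV0closed : IsClosed (V0 : Set H))
    (hjV0 : ∀ w ∈ V0, j w ∈ Lσ)
    -- `S` is the orthogonal projection of `H` onto `V0` (continuous Stokes projector)
    (S : H → H) (hSmem : ∀ x, S x ∈ V0) (hSorth : ∀ x, x - S x ∈ V0ᗮ)
    (Vh0 Vh : Submodule ℝ H) (hVh0Vh : Vh0 ≤ Vh)
    (hVh0closed : IsClosed (Vh0 : Set H)) (hVhclosed : IsClosed (Vh : Set H))
    -- `Sh` is the orthogonal projection of `H` onto `Vh0` (discrete Stokes projector)
    (Sh : H → H) (hShmem : ∀ x, Sh x ∈ Vh0) (hShorth : ∀ x, x - Sh x ∈ Vh0ᗮ)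
    -- the reconstruction operator `Ih`
    (Ih : Vh0 →ₗ[ℝ] L) (hIhLσ : ∀ w : Vh0, Ih w ∈ Lσ)
    (ε₁ : ℝ) (hε₁ : 0 ≤ ε₁)
    (hIh : ∀ w : Vh0, ‖j (w : H) - Ih w‖ ≤ ε₁ * ‖(w : H)‖)
    -- the smoothing operator `E : Vh0 → V0` and its properties
    (E : Vh0 →ₗ[ℝ] H) (hEV0 : ∀ w : Vh0, E w ∈ V0)
    (C_E ε_E : ℝ) (hC_E : 0 ≤ C_E) (hε_E : 0 ≤ ε_E)
    (hEorth : ∀ w : Vh0, ∀ u ∈ Vh, ⟪u, E w - (w : H)⟫ = 0)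
    (hEbound : ∀ w : Vh0, ‖E w‖ ≤ C_E * ‖(w : H)‖)
    (hEapprox : ∀ w : Vh0, ‖j (E w) - j (w : H)‖ ≤ ε_E * ‖(w : H)‖)
    (δ : ℝ) (hδ : 0 ≤ δ)
    -- solvability of the dual problem with regularity/approximation estimate
    (hdual : ∀ z : L, ∃ ψ ∈ V0, ∃ ψh ∈ Vh,
      (∀ y ∈ V0, ⟪ψ, y⟫ = ⟪z, j y⟫) ∧ ‖ψ - ψh‖ ≤ δ * ‖z‖)
    (ν : ℝ) (hν : 0 < ν) (f : L)
    (v : H) (hv : v ∈ V0)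
    (hweak : ∀ w ∈ V0, ν * ⟪v, w⟫ = ⟪f, j w⟫)
    (vh : H) (hvh : vh ∈ Vh0)
    (hweakh : ∀ w : Vh0, ν * ⟪vh, (w : H)⟫ = ⟪f, Ih w⟫) :
    ‖vh - Sh v‖ ≤ (ε₁ + ε_E + (1 + C_E) * δ) * ν⁻¹ * ‖P f‖ := by
  -- only the `Lσ`-component of the load is seen by test functions with values in `Lσ`
  have hP : ∀ x ∈ Lσ, ⟪f, x⟫ = ⟪P f, x⟫ := by
    intro x hx
    have h := Submodule.inner_left_of_mem_orthogonal hx (hPorth f)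
    rw [inner_sub_left] at h
    linarith
  obtain ⟨ψ, hψ, ψh, hψh, hψeq, hψδ⟩ := hdual (P f)
  have hψv : ψ = ν • v := by
    have hmem : ψ - ν • v ∈ V0 := V0.sub_mem hψ (V0.smul_mem ν hv)
    rw [← sub_eq_zero, ← inner_self_eq_zero (𝕜 := ℝ), inner_sub_left, real_inner_smul_left,
      hψeq _ hmem, hweak _ hmem, hP _ (hjV0 _ hmem), sub_self]
  obtain ⟨w, hw⟩ : ∃ w : Vh0, (w : H) = vh - Sh v :=
    ⟨⟨_, Vh0.sub_mem hvh (hShmem v)⟩, rfl⟩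
  rw [← hw]
  have hSh : ⟪Sh v, (w : H)⟫ = ⟪v, (w : H)⟫ := by
    have h := Submodule.inner_left_of_mem_orthogonal w.2 (hShorth v)
    rw [inner_sub_left] at h
    linarith
  have hsplit : ν * ‖(w : H)‖ ^ 2 =
      -⟪P f, j w - Ih w⟫ - ⟪P f, j (E w) - j w⟫ + ⟪ψ - ψh, E w - (w : H)⟫ := by
    have h1 : ‖(w : H)‖ ^ 2 = ⟪vh, (w : H)⟫ - ⟪v, (w : H)⟫ := by
      rw [← hSh, ← inner_sub_left, ← hw, real_inner_self_eq_norm_sq]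
    have h2 := hweakh w
    have h3 := hweak _ (hEV0 w)
    rw [hP _ (hIhLσ w)] at h2
    rw [hP _ (hjV0 _ (hEV0 w))] at h3
    rw [h1, inner_sub_left ψ, hEorth w ψh hψh, hψv, real_inner_smul_left]
    simp only [inner_sub_right]
    linarith
  have hb1 : -⟪P f, j w - Ih w⟫ ≤ ‖P f‖ * (ε₁ * ‖(w : H)‖) :=
    (neg_le_abs _).trans <| (abs_real_inner_le_norm _ _).trans <| by gcongr; exact hIh w
  have hb2 : -⟪P f, j (E w) - j w⟫ ≤ ‖P f‖ * (ε_E * ‖(w : H)‖) :=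
    (neg_le_abs _).trans <| (abs_real_inner_le_norm _ _).trans <| by gcongr; exact hEapprox w
  have hEw : ‖E w - (w : H)‖ ≤ (1 + C_E) * ‖(w : H)‖ := by
    linarith [norm_sub_le (E w) (w : H), hEbound w]
  have hb3 : ⟪ψ - ψh, E w - (w : H)⟫ ≤ (δ * ‖P f‖) * ((1 + C_E) * ‖(w : H)‖) :=
    (real_inner_le_norm _ _).trans <| by gcongr
  rcases (norm_nonneg (w : H)).eq_or_lt with h0 | hpos
  · rw [← h0]
    positivity
  · have hmain : ν * ‖(w : H)‖ ≤ (ε₁ + ε_E + (1 + C_E) * δ) * ‖P f‖ :=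
      le_of_mul_le_mul_right (by linarith) hpos
    rw [mul_right_comm, ← div_eq_mul_inv, le_div_iff₀ hν]
    linarith
end

section
/- Let H and L be real Hilbert spaces, j : H → L a bounded linear map, L_σ a closed subspace of L with orthogonal projection P : L → L. Let V⁰ be a closed subspace of H with j(V⁰) ⊆ L_σ and orthogonal projection S : H → H onto V⁰, and let V_h⁰ be a closed subspace of H with orthogonal projection S_h : H → H onto V_h⁰. Assume the duality estimate ‖j w − j(S w)‖_L ≤ ε₂·‖w‖_H for all w ∈ V_h⁰ with ε₂ ≥ 0, and let E : V_h⁰ → V⁰ be a linear map with ‖j(E w) − j w‖_L ≤ ε_E·‖w‖_H for all w ∈ V_h⁰, where ε_E ≥ 0. Let ν > 0, f ∈ L. If v ∈ V⁰ satisfies ν·⟨v, w⟩_H = ⟨f, j w⟩_L for all w ∈ V⁰, and v_h ∈ V_h⁰ satisfies ν·⟨v_h, w⟩_H = ⟨f, j w⟩_L for all w ∈ V_h⁰, then ‖v_h − S_h(v)‖_H ≤ ε₂·ν⁻¹·‖P f‖_L + ε_E·ν⁻¹·‖f − P f‖_L. -/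
/-!
The error `e = vh - Sh v` lies in `Vh0`. Testing both weak formulations, the discrete one with `e`
and the continuous one with `S e`, and using the orthogonality of `Sh` and `S`, gives
`ν ‖e‖² = ⟪f, j e - j (S e)⟫`. Split `f = P f + (f - P f)`. The first part is bounded by the duality
estimate. For the second, `f - P f` is orthogonal to `Lσ`, which contains both `j (S e)` and
`j (E e)`, so `S e` may be replaced by `E e` and the approximation property of `E` applies.
Cauchy–Schwarz and division by `ν ‖e‖` conclude.
-/

open RealInnerProductSpace

/-- Abstract form of the second estimate of Theorem 8.2 (consistency error estimate for the
classical, unmodified, nonconforming Crouzeix–Raviart method):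
`‖v_h − S_h(v)‖_H ≤ ε₂ ν⁻¹‖P f‖_L + ε_E ν⁻¹‖f − P f‖_L`. -/
theorem consistency_error_estimate_crouzeix_raviart_classical
    {H L : Type*}
    [NormedAddCommGroup H] [InnerProductSpace ℝ H] [CompleteSpace H]
    [NormedAddCommGroup L] [InnerProductSpace ℝ L] [CompleteSpace L]
    (j : H →L[ℝ] L)
    (Lσ : Submodule ℝ L) (hLσclosed : IsClosed (Lσ : Set L))
    -- `P` is the orthogonal projection of `L` onto `Lσ`
    (P : L → L) (hPmem : ∀ x, P x ∈ Lσ) (hPorth : ∀ x, x - P x ∈ Lσᗮ)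
    (V0 : Submodule ℝ H) (hV0closed : IsClosed (V0 : Set H))
    (hjV0 : ∀ w ∈ V0, j w ∈ Lσ)
    -- `S` is the orthogonal projection of `H` onto `V0` (continuous Stokes projector)
    (S : H → H) (hSmem : ∀ x, S x ∈ V0) (hSorth : ∀ x, x - S x ∈ V0ᗮ)
    (Vh0 : Submodule ℝ H) (hVh0closed : IsClosed (Vh0 : Set H))
    -- `Sh` is the orthogonal projection of `H` onto `Vh0` (discrete Stokes projector)
    (Sh : H → H) (hShmem : ∀ x, Sh x ∈ Vh0) (hShorth : ∀ x, x - Sh x ∈ Vh0ᗮ)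
    (ε₂ : ℝ) (hε₂ : 0 ≤ ε₂)
    (hduality : ∀ w ∈ Vh0, ‖j w - j (S w)‖ ≤ ε₂ * ‖w‖)
    -- the smoothing operator `E : Vh0 → V0` and its approximation property
    (E : Vh0 →ₗ[ℝ] H) (hEV0 : ∀ w : Vh0, E w ∈ V0)
    (ε_E : ℝ) (hε_E : 0 ≤ ε_E)
    (hEapprox : ∀ w : Vh0, ‖j (E w) - j (w : H)‖ ≤ ε_E * ‖(w : H)‖)
    (ν : ℝ) (hν : 0 < ν) (f : L)
    (v : H) (hv : v ∈ V0)
    (hweak : ∀ w ∈ V0, ν * ⟪v, w⟫ = ⟪f, j w⟫)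
    (vh : H) (hvh : vh ∈ Vh0)
    (hweakh : ∀ w ∈ Vh0, ν * ⟪vh, w⟫ = ⟪f, j w⟫) :
    ‖vh - Sh v‖ ≤ ε₂ * ν⁻¹ * ‖P f‖ + ε_E * ν⁻¹ * ‖f - P f‖ := by
  set e := vh - Sh v with he_def
  have he : e ∈ Vh0 := Vh0.sub_mem hvh (hShmem v)
  have hSh : ⟪Sh v, e⟫ = ⟪v, e⟫ := by
    have h := Submodule.inner_left_of_mem_orthogonal he (hShorth v)
    rw [inner_sub_left] at h
    linarith
  have hS : ⟪v, e⟫ = ⟪v, S e⟫ := by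
    have h := Submodule.inner_right_of_mem_orthogonal hv (hSorth e)
    rw [inner_sub_right] at h
    linarith
  have henergy : ν * ‖e‖ ^ 2 = ⟪f, j e - j (S e)⟫ := by
    have h : ⟪e, e⟫ = ⟪vh, e⟫ - ⟪Sh v, e⟫ := by
      rw [← inner_sub_left]
    rw [← real_inner_self_eq_norm_sq, h, hSh, hS, mul_sub, hweakh e he,
      hweak _ (hSmem e), inner_sub_right]
  -- `f - P f` annihilates `Lσ`, so `j (S e)` may be exchanged for `j (E e)`.
  have hsplit : ⟪f, j e - j (S e)⟫
      = ⟪P f, j e - j (S e)⟫ + ⟪f - P f, j e - j (E ⟨e, he⟩)⟫ := by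
    have h₁ := Submodule.inner_left_of_mem_orthogonal (hjV0 _ (hSmem e)) (hPorth f)
    have h₂ := Submodule.inner_left_of_mem_orthogonal (hjV0 _ (hEV0 ⟨e, he⟩)) (hPorth f)
    simp only [inner_sub_left, inner_sub_right] at h₁ h₂ ⊢
    linarith
  have hsolenoidal : ⟪P f, j e - j (S e)⟫ ≤ ‖P f‖ * (ε₂ * ‖e‖) :=
    (real_inner_le_norm _ _).trans
      (mul_le_mul_of_nonneg_left (hduality e he) (norm_nonneg _))
  have hgradient : ⟪f - P f, j e - j (E ⟨e, he⟩)⟫ ≤ ‖f - P f‖ * (ε_E * ‖e‖) := by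
    refine (real_inner_le_norm _ _).trans (mul_le_mul_of_nonneg_left ?_ (norm_nonneg _))
    rw [norm_sub_rev]
    exact hEapprox ⟨e, he⟩
  have hrhs : ε₂ * ν⁻¹ * ‖P f‖ + ε_E * ν⁻¹ * ‖f - P f‖
      = (ε₂ * ‖P f‖ + ε_E * ‖f - P f‖) / ν := by
    field_simp
  rw [hrhs, le_div_iff₀ hν]
  rcases (norm_nonneg e).eq_or_lt with h0 | hpos
  · rw [← h0, zero_mul]
    positivity
  · refine le_of_mul_le_mul_right ?_ hpos
    linarith
end
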